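/- No permutation of (F_2)^4 is differentially 2-uniform with respect to XOR; that is, for every bijection S : (F_2)^4 → (F_2)^4 there exist a nonzero a and some c with |{x : S(x + a) + S(x) = c}| ≥ 4. -/

import Mathlib

/-- Sign of the inner product of two 4-bit vectors. -/
def chi (u x : BitVec 4) : ℤ :=
  if ((u &&& x).getLsbD 0 ^^ (u &&& x).getLsbD 1 ^^ (u &&& x).getLsbD 2 ^^ (u &&& x).getLsbD 3)
  then -1 else 1

theorem chi_xor_right : ∀ u x y : BitVec 4, chi u (x ^^^ y) = chi u x * chi u y := by
  decide +kernel

theorem chi_xor_left : ∀ u x y : BitVec 4, chi (x ^^^ y) u = chi x u * chi y u := by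
  decide +kernel

theorem chi_zero_left : ∀ x : BitVec 4, chi 0 x = 1 := by decide +kernel

theorem chi_cases (u x : BitVec 4) : chi u x = 1 ∨ chi u x = -1 := by
  unfold chi; split <;> simp

theorem chi_sum_left : ∀ x : BitVec 4, ∑ u, chi u x = if x = 0 then 16 else 0 := by
  decide +kernel

theorem chi_sum_right : ∀ u : BitVec 4, ∑ x, chi u x = if u = 0 then 16 else 0 := by
  decide +kernel

theorem xor0 : ∀ x y : BitVec 4, x ^^^ y = 0 ↔ x = y := by decide +kernel

theorem card16 : Fintype.card (BitVec 4) = 16 := by decide +kernel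

/-- Walsh transform. -/
def walsh (s : BitVec 4 → ℤ) (u : BitVec 4) : ℤ := ∑ x, s x * chi u x

theorem parseval (s : BitVec 4 → ℤ) (hs : ∀ x, s x = 1 ∨ s x = -1) :
    ∑ u, walsh s u ^ 2 = 256 := by
  have h1 : ∀ u, walsh s u ^ 2 = ∑ x, ∑ y, s x * s y * chi u (x ^^^ y) := by
    intro u
    rw [walsh, sq, Finset.sum_mul_sum]
    refine Finset.sum_congr rfl fun x _ => Finset.sum_congr rfl fun y _ => ?_
    rw [chi_xor_right]; ring
  simp_rw [h1]
  rw [Finset.sum_comm]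
  have h2 : ∀ x, ∑ u, ∑ y, s x * s y * chi u (x ^^^ y) = 16 := by
    intro x
    rw [Finset.sum_comm]
    simp_rw [← Finset.mul_sum, chi_sum_left, xor0]
    rcases hs x with h | h <;> simp [h]
  simp_rw [h2]
  simp [card16]

theorem walsh_dvd (s : BitVec 4 → ℤ) (hs : ∀ x, s x = 1 ∨ s x = -1)
    (h0 : ∑ x, s x = 0) (u : BitVec 4) (hu : u ≠ 0) : (4 : ℤ) ∣ walsh s u := by
  have h1 : walsh s u = ∑ x, (1 + chi u x) * (s x - 1) + ∑ x, (1 + chi u x) - ∑ x, s x := by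
    rw [walsh, ← Finset.sum_add_distrib, ← Finset.sum_sub_distrib]
    exact Finset.sum_congr rfl fun x _ => by ring
  rw [h1, h0, Finset.sum_add_distrib, chi_sum_right, if_neg hu]
  have h2 : (4 : ℤ) ∣ ∑ x, (1 + chi u x) * (s x - 1) := by
    refine Finset.dvd_sum fun x _ => ?_
    rcases hs x with h | h <;> rcases chi_cases u x with h' | h' <;> rw [h, h'] <;> norm_num
  simp [card16]
  omega

theorem walsh_dvd8 (s : BitVec 4 → ℤ) (hs : ∀ x, s x = 1 ∨ s x = -1)
    (h0 : ∑ x, s x = 0) (a b : BitVec 4) (ha : a ≠ 0) (hb : b ≠ 0) :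
    (8 : ℤ) ∣ walsh s a + walsh s b + walsh s (a ^^^ b) := by
  have h1 : walsh s a + walsh s b + walsh s (a ^^^ b) =
      ∑ x, (1 + chi a x) * (1 + chi b x) * (s x - 1) +
        ∑ x, (1 + chi a x + chi b x + chi (a ^^^ b) x) - ∑ x, s x := by
    simp only [walsh]
    rw [← Finset.sum_add_distrib, ← Finset.sum_add_distrib, ← Finset.sum_add_distrib,
      ← Finset.sum_sub_distrib]
    exact Finset.sum_congr rfl fun x _ => by rw [chi_xor_left]; ring
  rw [h1, h0]
  simp only [Finset.sum_add_distrib]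
  rw [chi_sum_right, chi_sum_right, chi_sum_right, if_neg ha, if_neg hb]
  have h2 : (8 : ℤ) ∣ ∑ x, (1 + chi a x) * (1 + chi b x) * (s x - 1) := by
    refine Finset.dvd_sum fun x _ => ?_
    rcases hs x with h | h <;> rcases chi_cases a x with h' | h' <;>
      rcases chi_cases b x with h'' | h'' <;> rw [h, h', h''] <;> norm_num
  simp [card16]
  split <;> omega

theorem pt_even (w : ℤ) (h : Even w) : 4 * w ^ 2 ≤ w ^ 4 := by
  obtain ⟨k, rfl⟩ := h
  have : 0 ≤ k ^ 2 * (k ^ 2 - 1) := by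
    rcases eq_or_ne k 0 with rfl | hk
    · simp
    · have : 0 < k ^ 2 := by positivity
      exact mul_nonneg this.le (by omega)
  nlinarith

theorem pt_any (w : ℤ) : 4 * w ^ 2 - 3 ≤ w ^ 4 := by
  have : 0 ≤ (w ^ 2 - 1) * (w ^ 2 - 3) := by
    rcases le_or_gt (w ^ 2) 1 with h | h
    · nlinarith
    · have : 2 ≤ |w| := by
        by_contra hc
        have : |w| ≤ 1 := by omega
        have := abs_nonneg w
        nlinarith [sq_abs w]
      have := abs_nonneg w
      exact mul_nonneg (by omega) (by nlinarith [sq_abs w])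
  nlinarith

theorem fourth (s : BitVec 4 → ℤ) (hs : ∀ x, s x = 1 ∨ s x = -1)
    (h0 : ∑ x, s x = 0) : 10240 ≤ ∑ u, walsh s u ^ 4 := by
  have hw0 : walsh s 0 = 0 := by simp only [walsh, chi_zero_left, mul_one, h0]
  have hd : ∀ u, ∃ k, walsh s u = 4 * k := by
    intro u
    by_cases hu : u = 0
    · exact ⟨0, by rw [hu, hw0]; rfl⟩
    · exact walsh_dvd s hs h0 u hu
  choose w hw using hd
  have hp := parseval s hs
  simp_rw [hw, mul_pow, ← Finset.mul_sum] at hp ⊢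
  suffices 40 ≤ ∑ u, w u ^ 4 by linarith
  have hp' : ∑ u, w u ^ 2 = 16 := by linarith
  by_cases hodd : ∀ u, Even (w u)
  · have := Finset.sum_le_sum fun u (_ : u ∈ Finset.univ) => pt_even (w u) (hodd u)
    rw [← Finset.mul_sum] at this
    linarith
  · push Not at hodd
    obtain ⟨a, ha⟩ := hodd
    have hw00 : w 0 = 0 := by have := hw 0; omega
    have ha0 : a ≠ 0 := by
      rintro rfl
      rw [hw00] at ha
      exact ha Even.zero
    have hpair : ∀ b, 4 * (w b ^ 2 + w (a ^^^ b) ^ 2) - 3 ≤ w b ^ 4 + w (a ^^^ b) ^ 4 := by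
      intro b
      have : Even (w b) ∨ Even (w (a ^^^ b)) := by
        by_cases hb : b = 0
        · left; rw [hb, hw00]; exact Even.zero
        · have h8 := walsh_dvd8 s hs h0 a b ha0 hb
          rw [hw, hw, hw] at h8
          simp only [Int.even_iff] at ha ⊢
          omega
      rcases this with h | h
      · linarith [pt_even _ h, pt_any (w (a ^^^ b))]
      · linarith [pt_even _ h, pt_any (w b)]
    have hsum := Finset.sum_le_sum fun u (_ : u ∈ Finset.univ) => hpair u
    have hinv : Function.Involutive (fun b : BitVec 4 => a ^^^ b) := by
      intro b; simp [← BitVec.xor_assoc]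
    have hre : ∀ n : ℕ, ∑ b, w (a ^^^ b) ^ n = ∑ b, w b ^ n := fun n =>
      Equiv.sum_comp hinv.toPerm (fun b => w b ^ n)
    rw [Finset.sum_sub_distrib, ← Finset.mul_sum, Finset.sum_add_distrib,
      Finset.sum_add_distrib, hre, hre, hp'] at hsum
    simp [card16] at hsum
    linarith

theorem pow4_sum {ι κ : Type} [Fintype ι] [Fintype κ] (F : ι → κ → ℤ) :
    ∑ p, (∑ x, F p x) ^ 4 = ∑ x, ∑ y, ∑ z, ∑ t, ∑ p, F p x * F p y * F p z * F p t := by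
  have h : ∀ p, (∑ x, F p x) ^ 4 = ∑ x, ∑ y, ∑ z, ∑ t, F p x * F p y * F p z * F p t := by
    intro p
    rw [show (∑ x, F p x) ^ 4 =
      (∑ x, F p x) * ((∑ x, F p x) * ((∑ x, F p x) * (∑ x, F p x))) by ring]
    simp only [Finset.mul_sum, Finset.sum_mul]
    refine Finset.sum_congr rfl fun x _ => Finset.sum_congr rfl fun y _ =>
      Finset.sum_congr rfl fun z _ => Finset.sum_congr rfl fun t _ => ?_
    ring
  simp_rw [h]
  rw [Finset.sum_comm]; refine Finset.sum_congr rfl fun x _ => ?_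
  rw [Finset.sum_comm]; refine Finset.sum_congr rfl fun y _ => ?_
  rw [Finset.sum_comm]; refine Finset.sum_congr rfl fun z _ => ?_
  rw [Finset.sum_comm]

theorem upper (S : BitVec 4 → BitVec 4)
    (h : ∀ x y z : BitVec 4, S x ^^^ S y ^^^ S z ^^^ S (x ^^^ y ^^^ z) = 0 →
      x = y ∨ x = z ∨ y = z) :
    ∑ v, ∑ u, walsh (fun x => chi v (S x)) u ^ 4 ≤ 196608 := by
  have e1 : ∑ v, ∑ u, walsh (fun x => chi v (S x)) u ^ 4 =
      ∑ p : BitVec 4 × BitVec 4, (∑ x, chi p.1 (S x) * chi p.2 x) ^ 4 := by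
    rw [Fintype.sum_prod_type]; rfl
  rw [e1, pow4_sum]
  have e2 : ∀ x y z t : BitVec 4, ∑ p : BitVec 4 × BitVec 4,
      chi p.1 (S x) * chi p.2 x * (chi p.1 (S y) * chi p.2 y) *
        (chi p.1 (S z) * chi p.2 z) * (chi p.1 (S t) * chi p.2 t) =
      if x ^^^ y ^^^ z = t then
        (if S x ^^^ S y ^^^ S z ^^^ S t = 0 then 256 else 0) else 0 := by
    intro x y z t
    have : ∀ p : BitVec 4 × BitVec 4,
      chi p.1 (S x) * chi p.2 x * (chi p.1 (S y) * chi p.2 y) *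
        (chi p.1 (S z) * chi p.2 z) * (chi p.1 (S t) * chi p.2 t) =
      chi p.1 (S x ^^^ S y ^^^ S z ^^^ S t) * chi p.2 (x ^^^ y ^^^ z ^^^ t) := by
      intro p; simp only [chi_xor_right]; ring
    simp_rw [this]
    rw [Fintype.sum_prod_type]
    simp only
    rw [← Finset.sum_mul_sum, chi_sum_left, chi_sum_left]
    simp only [xor0 (x ^^^ y ^^^ z)]
    split_ifs <;> norm_num
  simp_rw [e2]
  simp only [Finset.sum_ite_eq, Finset.mem_univ, if_true]
  have e3 : ∀ x y z : BitVec 4,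
      (if S x ^^^ S y ^^^ S z ^^^ S (x ^^^ y ^^^ z) = 0 then (256 : ℤ) else 0) ≤
      (if x = y then 256 else 0) + (if x = z then 256 else 0) + (if y = z then 256 else 0) := by
    intro x y z
    have := h x y z
    split_ifs <;> simp_all
  refine (Finset.sum_le_sum fun x _ => Finset.sum_le_sum fun y _ =>
    Finset.sum_le_sum fun z _ => e3 x y z).trans ?_
  simp only [Finset.sum_add_distrib, Finset.sum_ite_eq, Finset.mem_univ, if_true,
    Finset.sum_const, Finset.card_univ, card16, ← Finset.smul_sum]
  norm_num

/-- No permutation of (F_2)^4 is differentially 2-uniform w.r.t. XOR (no APN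
permutation on 4 bits): every bijection S has a nonzero a and some c with
|{x : S(x+a)+S(x) = c}| ≥ 4. -/
theorem no_apn_permutation_4bits (S : BitVec 4 → BitVec 4)
    (hS : Function.Bijective S) :
    ∃ a : BitVec 4, a ≠ 0 ∧ ∃ c : BitVec 4,
      4 ≤ Nat.card {x : BitVec 4 // S (x ^^^ a) ^^^ S x = c} := by
  by_contra hcon
  have key : ∀ x y z : BitVec 4, S x ^^^ S y ^^^ S z ^^^ S (x ^^^ y ^^^ z) = 0 →
      x = y ∨ x = z ∨ y = z := by
    intro x y z h
    by_contra! hne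
    obtain ⟨hxy, hxz, hyz⟩ := hne
    apply hcon
    refine ⟨x ^^^ y, fun e => hxy ((xor0 x y).1 e), S x ^^^ S y, ?_⟩
    rw [Nat.card_eq_fintype_card, Fintype.card_subtype]
    have hcard : ({x, y, z, x ^^^ y ^^^ z} : Finset (BitVec 4)).card = 4 := by
      have : ∀ x y z : BitVec 4, x ≠ y → x ≠ z → y ≠ z →
        ({x, y, z, x ^^^ y ^^^ z} : Finset (BitVec 4)).card = 4 := by decide +kernel
      exact this x y z hxy hxz hyz
    refine hcard.symm.le.trans (Finset.card_le_card ?_)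
    have g1 : x ^^^ (x ^^^ y) = y := by simp [← BitVec.xor_assoc]
    have g2 : y ^^^ (x ^^^ y) = x := by rw [BitVec.xor_comm x y]; simp [← BitVec.xor_assoc]
    have g3 : z ^^^ (x ^^^ y) = x ^^^ y ^^^ z := BitVec.xor_comm _ _
    have g4 : x ^^^ y ^^^ z ^^^ (x ^^^ y) = z := by
      rw [BitVec.xor_comm (x ^^^ y) z, BitVec.xor_assoc]; simp
    have h' : S x ^^^ S y = S z ^^^ S (x ^^^ y ^^^ z) := by
      rwa [BitVec.xor_assoc, xor0] at h
    intro q hq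
    simp only [Finset.mem_insert, Finset.mem_singleton] at hq
    simp only [Finset.mem_filter, Finset.mem_univ, true_and]
    rcases hq with rfl | rfl | rfl | rfl
    · rw [g1, BitVec.xor_comm]
    · rw [g2]
    · rw [g3, h', BitVec.xor_comm]
    · rw [g4, h']
  have hup := upper S key
  have hlow : ∀ v : BitVec 4, 10240 + (if v = 0 then 55296 else 0) ≤
      ∑ u, walsh (fun x => chi v (S x)) u ^ 4 := by
    intro v
    by_cases hv : v = 0
    · subst hv
      have h1 : walsh (fun x => chi 0 (S x)) 0 = 16 := by
        simp only [walsh, chi_zero_left]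
        simp [card16]
      have h2 := Finset.single_le_sum
        (f := fun u => walsh (fun x => chi 0 (S x)) u ^ 4)
        (fun u _ => by positivity) (Finset.mem_univ 0)
      simp only [h1] at h2
      rw [if_pos rfl]
      linarith
    · rw [if_neg hv, add_zero]
      apply fourth _ (fun x => chi_cases v (S x))
      have := Equiv.sum_comp (Equiv.ofBijective S hS) (fun x => chi v x)
      simp only [Equiv.ofBijective_apply] at this
      rw [this, chi_sum_right, if_neg hv]
  have hfin := Finset.sum_le_sum fun v (_ : v ∈ Finset.univ) => hlow v
  rw [Finset.sum_add_distrib, Finset.sum_ite_eq', if_pos (Finset.mem_univ _),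
    Finset.sum_const, Finset.card_univ, card16] at hfin
  norm_num at hfin
  linarith
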